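/- The two standard charts U₁ and U₂ of the blow-up of 𝔸³ at the origin intersect the strict transform of {z^p + h(x,y) = 0} (with h degree-q homogeneous without multiple factors, p > q coprime to q, x ∤ h, y ∤ h) in smooth surfaces: U₁ ∩ S = {z₁^p x₁^{p−q} + h(1,y₁) = 0} and U₂ ∩ S = {z₂^p y₂^{p−q} + h(x₂,1) = 0} are smooth. -/

import Mathlib

open MvPolynomial

/-!
The strict transform in a chart is `z ^ p * x ^ (p - q) + g`, where `x` is the equation of the
exceptional divisor and `g`, the dehomogenisation of `h`, involves neither `x` nor `z`. Applying
`x ∂/∂x` and `z ∂/∂z` multiplies the monomial by `p - q` and by `p`. These are coprime, so at a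
singular point the monomial vanishes, in every characteristic, and hence so does `g`. The remaining
derivative vanishes too, so this zero of `g` is multiple; as `h` is homogeneous, it comes from a
linear form whose square divides `h`.
-/

section ChainRule

variable {R σ A M : Type*} [CommSemiring R] [CommSemiring A] [Algebra R A]
  [AddCommMonoid M] [Module R M] [Module A M]

lemma derivation_aeval_eq_sum [Fintype σ] (D : Derivation R A M) (s : σ → A)
    (f : MvPolynomial σ R) :
    D (aeval s f) = ∑ i, aeval s (pderiv i f) • D (s i) := by
  classical
  induction f using MvPolynomial.induction_on with
  | C a => simp [← algebraMap_eq]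
  | add f g hf hg => simp only [map_add, hf, hg, add_smul, Finset.sum_add_distrib]
  | mul_X f j hf =>
    simp only [map_mul, aeval_X, Derivation.leibniz, hf, pderiv_X, smul_eq_mul, map_add, add_smul,
      mul_smul, Finset.sum_add_distrib, Finset.smul_sum]
    simp [Pi.single_apply, apply_ite, ite_smul]

end ChainRule

section Homogeneous

variable {R σ : Type*}

lemma aeval_smul_of_isHomogeneous {S : Type*} [CommSemiring R] [CommSemiring S] [Algebra R S]
    {n : ℕ} {f : MvPolynomial σ R} (hf : f.IsHomogeneous n) (t : S) (s : σ → S) :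
    aeval (t • s) f = t ^ n * aeval s f := by
  simp only [aeval_def, eval₂_eq, Finset.mul_sum]
  refine Finset.sum_congr rfl fun m hm => ?_
  have degree_eq : ∑ k ∈ m.support, m k = n := by
    simpa [Finsupp.weight_apply, Finsupp.sum] using hf (mem_support_iff.mp hm)
  simp only [Pi.smul_apply, smul_eq_mul, mul_pow, Finset.prod_mul_distrib,
    Finset.prod_pow_eq_pow_sum, degree_eq]
  ring

variable [CommRing R]

lemma mem_of_isHomogeneous_of_eval_eq_zero {n : ℕ} {f g : MvPolynomial σ R}
    (hf : f.IsHomogeneous n) {c : σ → R} (hc : eval c f = 0) {I : Ideal (MvPolynomial σ R)}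
    (hI : ∀ k, X k - C (c k) * g ∈ I) : f ∈ I := by
  let π := Ideal.Quotient.mkₐ R I
  have π_X : π ∘ X = π g • (algebraMap R _ ∘ c) := by
    funext k
    have : π (X k) = π (C (c k) * g) := (Ideal.Quotient.mk_eq_mk_iff_sub_mem _ _).mpr (hI k)
    rw [Function.comp_apply, this, map_mul, mul_comm, ← algebraMap_eq, AlgHom.commutes]
    rfl
  refine Ideal.Quotient.eq_zero_iff_mem.mp ?_
  calc π f = aeval (π ∘ X) f := by rw [← aeval_unique]
    _ = π g ^ n * algebraMap R _ (eval c f) := by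
      rw [π_X, aeval_smul_of_isHomogeneous hf, ← coe_aeval_eq_eval, RingHom.coe_coe,
        ← aeval_algebraMap_apply]
    _ = 0 := by rw [hc, map_zero, mul_zero]

lemma X_sub_C_mul_X_dvd_of_isHomogeneous {n : ℕ} {f : MvPolynomial (Fin 2) R}
    (hf : f.IsHomogeneous n) {i j : Fin 2} (hij : j ≠ i) {c : Fin 2 → R} (hci : c i = 1)
    (hc : eval c f = 0) : X j - C (c j) * X i ∣ f := by
  refine Ideal.mem_span_singleton.mp (mem_of_isHomogeneous_of_eval_eq_zero hf hc (g := X i) ?_)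
  intro k
  obtain rfl | rfl : k = i ∨ k = j := by omega
  · simp [hci]
  · exact Ideal.mem_span_singleton_self _

lemma eval_pderiv_ne_zero_of_squarefree [Nontrivial R] {n : ℕ} {h : MvPolynomial (Fin 2) R}
    (hhom : h.IsHomogeneous n) (hsf : Squarefree h) {i j : Fin 2} (hij : j ≠ i) {c : Fin 2 → R}
    (hci : c i = 1) (hc : eval c h = 0) : eval c (pderiv j h) ≠ 0 := by
  intro hc'
  set L : MvPolynomial (Fin 2) R := X j - C (c j) * X i with hL
  obtain ⟨k, rfl⟩ : L ∣ h := X_sub_C_mul_X_dvd_of_isHomogeneous hhom hij hci hc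
  have pderiv_L : pderiv j L = 1 := by simp [hL, pderiv_X_of_ne hij.symm]
  have L_dvd_pderiv : L ∣ L * pderiv j k + k := by
    simpa [pderiv_L] using
      X_sub_C_mul_X_dvd_of_isHomogeneous hhom.pderiv hij hci hc'
  have L_dvd_k : L ∣ k := (dvd_add_right (dvd_mul_right L _)).mp L_dvd_pderiv
  have L_unit : IsUnit (eval c L) := (hsf L (mul_dvd_mul_left L L_dvd_k)).map (eval c)
  simp [hL, hci] at L_unit

end Homogeneous

section Charts

variable {R : Type*} [CommRing R]

lemma eval_monomial_eq_zero_of_coprime {σ : Type*} {m : σ →₀ ℕ} {r : R} {i j : σ}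
    (hm : (m i).Coprime (m j)) {a : σ → R} (hi : eval a (pderiv i (monomial m r)) = 0)
    (hj : eval a (pderiv j (monomial m r)) = 0) : eval a (monomial m r) = 0 := by
  have nsmul_eq_zero {l : σ} (hl : eval a (pderiv l (monomial m r)) = 0) :
      (m l : R) * eval a (monomial m r) = 0 := by
    rw [← nsmul_eq_mul, ← map_nsmul, ← X_mul_pderiv_monomial, map_mul, hl, mul_zero]
  obtain ⟨u, v, huv⟩ : IsCoprime (m i : R) (m j) := hm.cast
  linear_combination u * nsmul_eq_zero hi + v * nsmul_eq_zero hj - eval a (monomial m r) * huv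

variable {n : ℕ}

variable (R) in
/-- The coordinates `x_k / x_i` in the `i`-th chart of the blow-up of affine `(n + 1)`-space at the
origin, for `k` and `i` among the first `n` coordinates. Substituting them into a form in
`x_0, …, x_{n-1}` dehomogenises it with respect to `x_i`. -/
noncomputable def chartCoord (i k : Fin n) : MvPolynomial (Fin (n + 1)) R :=
  if k = i then 1 else X k.castSucc

/-- The equation, in the `i`-th chart of the blow-up of affine `(n + 1)`-space at the origin, of the
strict transform of `z ^ p + h = 0`, where `h` is a form of degree `q ≤ p` in the first `n`
coordinates and `z` is the last one. The exceptional divisor is `X i.castSucc = 0`. -/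
noncomputable def strictTransform (p q : ℕ) (h : MvPolynomial (Fin n) R) (i : Fin n) :
    MvPolynomial (Fin (n + 1)) R :=
  X (Fin.last n) ^ p * X i.castSucc ^ (p - q) + aeval (chartCoord R i) h

lemma eval_aeval_chartCoord (a : Fin (n + 1) → R) (i : Fin n) (h : MvPolynomial (Fin n) R) :
    eval a (aeval (chartCoord R i) h) = eval (fun k => if k = i then 1 else a k.castSucc) h := by
  have eval_coord :
      (fun k => aeval a (chartCoord R i k)) = fun k => if k = i then 1 else a k.castSucc := by
    funext k
    by_cases hk : k = i <;> simp [chartCoord, hk]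
  rw [← aeval_eq_eval, comp_aeval_apply, eval_coord, aeval_eq_eval]

lemma pderiv_aeval_chartCoord_eq_zero {l : Fin (n + 1)} {i : Fin n}
    (hl : ∀ k ≠ i, k.castSucc ≠ l) (h : MvPolynomial (Fin n) R) :
    pderiv l (aeval (chartCoord R i) h) = 0 := by
  rw [derivation_aeval_eq_sum]
  refine Finset.sum_eq_zero fun k _ => ?_
  by_cases hk : k = i
  · simp [chartCoord, hk]
  · simp [chartCoord, hk, pderiv_X_of_ne (hl k hk)]

lemma pderiv_castSucc_aeval_chartCoord {i j : Fin n} (hij : j ≠ i) (h : MvPolynomial (Fin n) R) :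
    pderiv j.castSucc (aeval (chartCoord R i) h) = aeval (chartCoord R i) (pderiv j h) := by
  rw [derivation_aeval_eq_sum, Finset.sum_eq_single j]
  · simp [chartCoord, hij]
  · intro k _ hkj
    by_cases hk : k = i
    · simp [chartCoord, hk]
    · simp [chartCoord, hk, pderiv_X_of_ne ((Fin.castSucc_injective n).ne hkj)]
  · simp

lemma eval_aeval_chartCoord_eq_zero_of_singular {p q : ℕ} (hqp : q ≤ p) (hcop : p.Coprime q)
    {h : MvPolynomial (Fin n) R} {i : Fin n} {a : Fin (n + 1) → R}
    (ha : eval a (strictTransform p q h i) = 0)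
    (hsing : ∀ l, eval a (pderiv l (strictTransform p q h i)) = 0) :
    eval a (aeval (chartCoord R i) h) = 0 := by
  let m : Fin (n + 1) →₀ ℕ := .single (Fin.last n) p + .single i.castSucc (p - q)
  have transform_eq :
      strictTransform p q h i = monomial m 1 + aeval (chartCoord R i) h := by
    simp [strictTransform, m, X_pow_eq_monomial, monomial_mul]
  have exponents_coprime : (m (Fin.last n)).Coprime (m i.castSucc) := by
    simpa [m, Finsupp.single_apply, Fin.castSucc_ne_last, (Fin.castSucc_ne_last _).symm] using
      (Nat.coprime_self_sub_right hqp).mpr hcop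
  have monomial_critical {l : Fin (n + 1)} (hl : ∀ k ≠ i, k.castSucc ≠ l) :
      eval a (pderiv l (monomial m (1 : R))) = 0 := by
    simpa only [transform_eq, map_add, pderiv_aeval_chartCoord_eq_zero hl, map_zero, add_zero]
      using hsing l
  have monomial_zero : eval a (monomial m (1 : R)) = 0 :=
    eval_monomial_eq_zero_of_coprime exponents_coprime
      (monomial_critical fun k _ => Fin.castSucc_ne_last k)
      (monomial_critical fun _ hk => (Fin.castSucc_injective n).ne hk)
  rwa [transform_eq, map_add, monomial_zero, zero_add] at ha

lemma pderiv_castSucc_strictTransform (p q : ℕ) (h : MvPolynomial (Fin n) R) {i j : Fin n}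
    (hij : j ≠ i) :
    pderiv j.castSucc (strictTransform p q h i) = aeval (chartCoord R i) (pderiv j h) := by
  rw [strictTransform, map_add, pderiv_castSucc_aeval_chartCoord hij]
  simp [pderiv_X_of_ne (Fin.castSucc_ne_last j).symm,
    pderiv_X_of_ne ((Fin.castSucc_injective n).ne hij.symm)]

theorem exists_eval_pderiv_strictTransform_ne_zero [Nontrivial R] {p q : ℕ} (hqp : q ≤ p)
    (hcop : p.Coprime q) {h : MvPolynomial (Fin 2) R} (hhom : h.IsHomogeneous q)
    (hsf : Squarefree h) (i : Fin 2) {a : Fin 3 → R}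
    (ha : eval a (strictTransform p q h i) = 0) :
    ∃ l, eval a (pderiv l (strictTransform p q h i)) ≠ 0 := by
  by_contra! hsing
  obtain ⟨j, hij⟩ := exists_ne i
  have h_zero := eval_aeval_chartCoord_eq_zero_of_singular hqp hcop ha hsing
  have pderiv_zero := hsing j.castSucc
  rw [pderiv_castSucc_strictTransform p q h hij, eval_aeval_chartCoord] at pderiv_zero
  rw [eval_aeval_chartCoord] at h_zero
  exact eval_pderiv_ne_zero_of_squarefree hhom hsf hij (if_pos rfl) h_zero pderiv_zero

end Charts

theorem stmt_8_general {R : Type*} [CommRing R] [Nontrivial R]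
    (p q : ℕ) (hqp : q ≤ p) (hcop : Nat.Coprime p q)
    (h : MvPolynomial (Fin 2) R) (hhom : h.IsHomogeneous q) (hsf : Squarefree h) :
    (∀ a : Fin 3 → R,
        eval a ((X 2 : MvPolynomial (Fin 3) R) ^ p * (X 0) ^ (p - q) +
          aeval (fun i => if i = 0 then 1 else (X 1 : MvPolynomial (Fin 3) R)) h) = 0 →
        ∃ i : Fin 3, eval a (pderiv i ((X 2 : MvPolynomial (Fin 3) R) ^ p * (X 0) ^ (p - q) +
          aeval (fun i => if i = 0 then 1 else (X 1 : MvPolynomial (Fin 3) R)) h)) ≠ 0) ∧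
    (∀ a : Fin 3 → R,
        eval a ((X 2 : MvPolynomial (Fin 3) R) ^ p * (X 1) ^ (p - q) +
          aeval (fun i => if i = 0 then (X 0 : MvPolynomial (Fin 3) R) else 1) h) = 0 →
        ∃ i : Fin 3, eval a (pderiv i ((X 2 : MvPolynomial (Fin 3) R) ^ p * (X 1) ^ (p - q) +
          aeval (fun i => if i = 0 then (X 0 : MvPolynomial (Fin 3) R) else 1) h)) ≠ 0) := by
  have chart_zero : (fun k : Fin 2 => if k = 0 then 1 else (X 1 : MvPolynomial (Fin 3) R)) =
      chartCoord R 0 := by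
    funext k; fin_cases k <;> rfl
  have chart_one : (fun k : Fin 2 => if k = 0 then (X 0 : MvPolynomial (Fin 3) R) else 1) =
      chartCoord R 1 := by
    funext k; fin_cases k <;> rfl
  rw [chart_zero, chart_one]
  exact ⟨fun _ => exists_eval_pderiv_strictTransform_ne_zero hqp hcop hhom hsf 0,
    fun _ => exists_eval_pderiv_strictTransform_ne_zero hqp hcop hhom hsf 1⟩

/-- The strict transforms of {z^p + h(x,y) = 0} in the first two charts of the blow-up
of 𝔸³ at the origin, namely {z₁^p x₁^{p−q} + h(1,y₁) = 0} and
{z₂^p y₂^{p−q} + h(x₂,1) = 0}, are smooth (Jacobian criterion). -/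
theorem stmt_8 {K : Type*} [Field K] [IsAlgClosed K] [CharZero K]
    (p q : ℕ) (hq : 2 ≤ q) (hpq : q < p) (hcop : Nat.Coprime p q)
    (h : MvPolynomial (Fin 2) K) (hhom : h.IsHomogeneous q) (hsf : Squarefree h)
    (hx : ¬ (X 0 : MvPolynomial (Fin 2) K) ∣ h)
    (hy : ¬ (X 1 : MvPolynomial (Fin 2) K) ∣ h) :
    (∀ a : Fin 3 → K,
        eval a ((X 2 : MvPolynomial (Fin 3) K) ^ p * (X 0) ^ (p - q) +
          aeval (fun i : Fin 2 => if i = 0 then 1 else (X 1 : MvPolynomial (Fin 3) K)) h) = 0 →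
        ∃ i : Fin 3, eval a (pderiv i ((X 2 : MvPolynomial (Fin 3) K) ^ p * (X 0) ^ (p - q) +
          aeval (fun i : Fin 2 => if i = 0 then 1 else (X 1 : MvPolynomial (Fin 3) K)) h)) ≠ 0) ∧
    (∀ a : Fin 3 → K,
        eval a ((X 2 : MvPolynomial (Fin 3) K) ^ p * (X 1) ^ (p - q) +
          aeval (fun i : Fin 2 => if i = 0 then (X 0 : MvPolynomial (Fin 3) K) else 1) h) = 0 →
        ∃ i : Fin 3, eval a (pderiv i ((X 2 : MvPolynomial (Fin 3) K) ^ p * (X 1) ^ (p - q) +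
          aeval (fun i : Fin 2 => if i = 0 then (X 0 : MvPolynomial (Fin 3) K) else 1) h)) ≠ 0) :=
  stmt_8_general p q hpq.le hcop h hhom hsf
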